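/- arXiv:2102.06555 — 2 statements merged into one kernel-verified Lean document; each statement's English description precedes it below -/
import Mathlib

section
/- Let C̄_1, …, C̄_S be symmetric matrices in ℝ^{N×N}, let h ∈ Σ_N, let D_h = diag(h), and let M ∈ ℝ^{S×S} be defined by M_{pq} = ⟨D_h C̄_p, C̄_q D_h⟩_F. Then for any two embeddings w⁽¹⁾, w⁽²⁾ ∈ Σ_S, the squared Gromov–Wasserstein distance between the two embedded graphs with shared node weights h satisfies GW₂²(∑_{s=1}^S w⁽¹⁾_s C̄_s, ∑_{s=1}^S w⁽²⁾_s C̄_s, h, h) ≤ (w⁽¹⁾ − w⁽²⁾)ᵀ M (w⁽¹⁾ − w⁽²⁾). -/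
open Matrix BigOperators Finset

/-- The probability simplex in `ℝ^n`. -/
def probSimplex (n : ℕ) : Set (Fin n → ℝ) :=
  {h | (∀ i, 0 ≤ h i) ∧ ∑ i, h i = 1}

/-- The set of couplings between two histograms. -/
def couplings {n m : ℕ} (h1 : Fin n → ℝ) (h2 : Fin m → ℝ) :
    Set (Matrix (Fin n) (Fin m) ℝ) :=
  {T | (∀ i j, 0 ≤ T i j) ∧ (∀ i, ∑ j, T i j = h1 i) ∧ (∀ j, ∑ i, T i j = h2 j)}

/-- The Gromov–Wasserstein objective `E(C1, C2, T)`. -/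
def gwObj {n m : ℕ} (C1 : Matrix (Fin n) (Fin n) ℝ) (C2 : Matrix (Fin m) (Fin m) ℝ)
    (T : Matrix (Fin n) (Fin m) ℝ) : ℝ :=
  ∑ i, ∑ j, ∑ k, ∑ l, (C1 i j - C2 k l) ^ 2 * T i k * T j l

/-- The squared Gromov–Wasserstein distance (minimum of the objective over couplings). -/
noncomputable def GW2sq {n m : ℕ} (C1 : Matrix (Fin n) (Fin n) ℝ)
    (C2 : Matrix (Fin m) (Fin m) ℝ) (h1 : Fin n → ℝ) (h2 : Fin m → ℝ) : ℝ :=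
  sInf (gwObj C1 C2 '' couplings h1 h2)

/-- Frobenius inner product `⟨A, B⟩_F = tr(Aᵀ B)`. -/
def frob {n m : ℕ} (A B : Matrix (Fin n) (Fin m) ℝ) : ℝ :=
  Matrix.trace (Aᵀ * B)

/-! Testing the Gromov–Wasserstein problem on the diagonal coupling, which matches every node with
itself, leaves the squared `h ⊗ h`-weighted Frobenius norm of `C1 - C2`. For two embeddings this
difference is `∑ s, (w1 s - w2 s) • Cbar s`, so bilinearity turns the norm into the quadratic form
of the weighted Gram matrix `M` of the atoms. -/

section GromovWasserstein

variable {n m : ℕ} {C1 : Matrix (Fin n) (Fin n) ℝ} {C2 : Matrix (Fin m) (Fin m) ℝ}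
  {h1 : Fin n → ℝ} {h2 : Fin m → ℝ} {T : Matrix (Fin n) (Fin m) ℝ}

theorem gwObj_nonneg (hT : ∀ i k, 0 ≤ T i k) : 0 ≤ gwObj C1 C2 T :=
  sum_nonneg fun i _ => sum_nonneg fun j _ => sum_nonneg fun k _ => sum_nonneg fun l _ =>
    mul_nonneg (mul_nonneg (sq_nonneg _) (hT i k)) (hT j l)

theorem bddBelow_gwObj_image_couplings : BddBelow (gwObj C1 C2 '' couplings h1 h2) :=
  ⟨0, Set.forall_mem_image.2 fun _ hT => gwObj_nonneg hT.1⟩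

theorem GW2sq_le_gwObj (hT : T ∈ couplings h1 h2) : GW2sq C1 C2 h1 h2 ≤ gwObj C1 C2 T :=
  csInf_le bddBelow_gwObj_image_couplings (Set.mem_image_of_mem _ hT)

end GromovWasserstein

section Frobenius

variable {n m : ℕ}

theorem frob_eq_sum (A B : Matrix (Fin n) (Fin m) ℝ) :
    frob A B = ∑ i, ∑ j, A i j * B i j := by
  simp only [frob, trace, diag_apply, mul_apply, transpose_apply]
  exact sum_comm

theorem frob_sum_smul_sum_smul {ι κ : Type*} [Fintype ι] [Fintype κ]
    (u : ι → ℝ) (A : ι → Matrix (Fin n) (Fin m) ℝ)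
    (v : κ → ℝ) (B : κ → Matrix (Fin n) (Fin m) ℝ) :
    frob (∑ p, u p • A p) (∑ q, v q • B q) = ∑ p, ∑ q, u p * frob (A p) (B q) * v q := by
  simp only [frob, transpose_sum, transpose_smul, Matrix.sum_mul, Matrix.mul_sum, smul_mul,
    Matrix.mul_smul, trace_sum, trace_smul, smul_eq_mul, Finset.mul_sum]
  rw [sum_comm]
  refine sum_congr rfl fun p _ => sum_congr rfl fun q _ => ?_
  ring

end Frobenius

section DiagonalCoupling

variable {n : ℕ}

theorem diagonal_mem_couplings {h : Fin n → ℝ} (hh : ∀ i, 0 ≤ h i) :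
    diagonal h ∈ couplings h h := by
  refine ⟨fun i j => ?_, fun i => ?_, fun j => ?_⟩
  · rw [diagonal_apply]
    split_ifs
    exacts [hh i, le_rfl]
  · simp [diagonal_apply]
  · simp [diagonal_apply]

theorem gwObj_diagonal (C1 C2 : Matrix (Fin n) (Fin n) ℝ) (h : Fin n → ℝ) :
    gwObj C1 C2 (diagonal h) = frob (diagonal h * (C1 - C2)) ((C1 - C2) * diagonal h) := by
  rw [frob_eq_sum, gwObj]
  refine sum_congr rfl fun i _ => sum_congr rfl fun j _ => ?_
  calc ∑ k, ∑ l, (C1 i j - C2 k l) ^ 2 * diagonal h i k * diagonal h j l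
      = (C1 i j - C2 i j) ^ 2 * h i * h j := by simp [diagonal_apply]
    _ = (diagonal h * (C1 - C2)) i j * ((C1 - C2) * diagonal h) i j := by
      rw [diagonal_mul, mul_diagonal, Matrix.sub_apply]
      ring

theorem GW2sq_le_frob_sub (C1 C2 : Matrix (Fin n) (Fin n) ℝ) {h : Fin n → ℝ}
    (hh : ∀ i, 0 ≤ h i) :
    GW2sq C1 C2 h h ≤ frob (diagonal h * (C1 - C2)) ((C1 - C2) * diagonal h) :=
  (GW2sq_le_gwObj (diagonal_mem_couplings hh)).trans_eq (gwObj_diagonal C1 C2 h)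

end DiagonalCoupling

theorem gw_mahalanobis_bound_general {N : ℕ} {ι : Type*} [Fintype ι]
    (Cbar : ι → Matrix (Fin N) (Fin N) ℝ) (h : Fin N → ℝ) (hh : ∀ i, 0 ≤ h i)
    (M : Matrix ι ι ℝ)
    (hM : ∀ p q, M p q = frob (diagonal h * Cbar p) (Cbar q * diagonal h))
    (w1 w2 : ι → ℝ) :
    GW2sq (∑ s, w1 s • Cbar s) (∑ s, w2 s • Cbar s) h h
      ≤ ∑ p, ∑ q, (w1 p - w2 p) * M p q * (w1 q - w2 q) := by
  have sub_eq : ∑ s, w1 s • Cbar s - ∑ s, w2 s • Cbar s = ∑ s, (w1 s - w2 s) • Cbar s := by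
    simp only [sub_smul, sum_sub_distrib]
  calc GW2sq (∑ s, w1 s • Cbar s) (∑ s, w2 s • Cbar s) h h
      ≤ frob (diagonal h * ∑ s, (w1 s - w2 s) • Cbar s)
          ((∑ s, (w1 s - w2 s) • Cbar s) * diagonal h) :=
        sub_eq ▸ GW2sq_le_frob_sub _ _ hh
    _ = frob (∑ p, (w1 p - w2 p) • (diagonal h * Cbar p))
          (∑ q, (w1 q - w2 q) • (Cbar q * diagonal h)) := by
        simp only [Matrix.mul_sum, Matrix.sum_mul, Matrix.mul_smul, smul_mul]
    _ = ∑ p, ∑ q, (w1 p - w2 p) * M p q * (w1 q - w2 q) := by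
        simp only [frob_sum_smul_sum_smul, hM]

/-- GW between two embedded graphs is bounded by the Mahalanobis distance between embeddings. -/
theorem gw_mahalanobis_bound {N S : ℕ}
    (Cbar : Fin S → Matrix (Fin N) (Fin N) ℝ) (hsym : ∀ s, (Cbar s).IsSymm)
    (h : Fin N → ℝ) (hh : h ∈ probSimplex N)
    (M : Matrix (Fin S) (Fin S) ℝ)
    (hM : ∀ p q, M p q = frob (Matrix.diagonal h * Cbar p) (Cbar q * Matrix.diagonal h))
    (w1 w2 : Fin S → ℝ) (hw1 : w1 ∈ probSimplex S) (hw2 : w2 ∈ probSimplex S) :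
    GW2sq (∑ s, w1 s • Cbar s) (∑ s, w2 s • Cbar s) h h
      ≤ ∑ p, ∑ q, (w1 p - w2 p) * M p q * (w1 q - w2 q) :=
  gw_mahalanobis_bound_general Cbar h hh.1 M hM w1 w2
end

section
/- Let h1 ∈ Σ_n, h2 ∈ Σ_m, C1 ∈ ℝ^{n×n}, C2 ∈ ℝ^{m×m}, and T ∈ U(h1,h2). Then the Gromov–Wasserstein objective admits the decomposition ∑_{i,j,k,l} (C1_{ij} − C2_{kl})² T_{ik} T_{jl} = ∑_{i,j} (C1_{ij})² (h1)_i (h1)_j + ∑_{k,l} (C2_{kl})² (h2)_k (h2)_l − 2⟨C1 T C2ᵀ, T⟩_F. -/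
open Matrix BigOperators Finset

section

variable {ι ι' κ κ' M R : Type*} [Fintype ι] [Fintype ι'] [Fintype κ] [Fintype κ']

theorem sum_sum_sum_sum_comm [AddCommMonoid M] (f : ι → ι' → κ → κ' → M) :
    ∑ i, ∑ j, ∑ k, ∑ l, f i j k l = ∑ k, ∑ l, ∑ i, ∑ j, f i j k l := by
  simpa only [Fintype.sum_prod_type] using
    sum_comm (s := univ) (t := univ) (f := fun (p : ι × ι') (q : κ × κ') => f p.1 p.2 q.1 q.2)

theorem sum_mul_mul_eq_of_row_sums [NonUnitalNonAssocSemiring R] (f : ι → ι' → R)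
    {S : ι → κ → R} {T : ι' → κ' → R} {a : ι → R} {b : ι' → R}
    (hS : ∀ i, ∑ k, S i k = a i) (hT : ∀ j, ∑ l, T j l = b j) :
    ∑ i, ∑ j, ∑ k, ∑ l, f i j * S i k * T j l = ∑ i, ∑ j, f i j * a i * b j := by
  simp only [← mul_sum, ← sum_mul, hS, hT]

theorem sum_mul_mul_eq_of_col_sums [NonUnitalNonAssocSemiring R] (g : κ → κ' → R)
    {S : ι → κ → R} {T : ι' → κ' → R} {c : κ → R} {d : κ' → R}
    (hS : ∀ k, ∑ i, S i k = c k) (hT : ∀ l, ∑ j, T j l = d l) :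
    ∑ i, ∑ j, ∑ k, ∑ l, g k l * S i k * T j l = ∑ k, ∑ l, g k l * c k * d l := by
  rw [sum_sum_sum_sum_comm]
  exact sum_mul_mul_eq_of_row_sums g hS hT

theorem trace_transpose_mul_mul_transpose_mul_eq_sum [NonUnitalCommSemiring R] (A : Matrix ι ι' R)
    (B : Matrix κ κ' R) (S : Matrix ι κ R) (T : Matrix ι' κ' R) :
    trace ((A * T * Bᵀ)ᵀ * S) = ∑ i, ∑ j, ∑ k, ∑ l, A i j * B k l * S i k * T j l :=
  calc
    trace ((A * T * Bᵀ)ᵀ * S) = ∑ k, ∑ i, ∑ l, ∑ j, A i j * T j l * B k l * S i k := by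
      simp only [trace, diag_apply, mul_apply, transpose_apply, sum_mul]
    _ = ∑ k, ∑ l, ∑ i, ∑ j, A i j * T j l * B k l * S i k :=
      sum_congr rfl fun _ _ => sum_comm
    _ = ∑ i, ∑ j, ∑ k, ∑ l, A i j * T j l * B k l * S i k :=
      (sum_sum_sum_sum_comm _).symm
    _ = ∑ i, ∑ j, ∑ k, ∑ l, A i j * B k l * S i k * T j l := by
      simp only [mul_right_comm _ (T _ _)]

/-- With `S` and `T` allowed to differ and `A`, `B` rectangular, the left-hand side is the objective
of co-optimal transport. -/
theorem gw_objective_decomposition_general [CommRing R]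
    {a : ι → R} {b : ι' → R} {c : κ → R} {d : κ' → R}
    (A : Matrix ι ι' R) (B : Matrix κ κ' R) {S : Matrix ι κ R} {T : Matrix ι' κ' R}
    (hSrow : ∀ i, ∑ k, S i k = a i) (hScol : ∀ k, ∑ i, S i k = c k)
    (hTrow : ∀ j, ∑ l, T j l = b j) (hTcol : ∀ l, ∑ j, T j l = d l) :
    ∑ i, ∑ j, ∑ k, ∑ l, (A i j - B k l) ^ 2 * S i k * T j l
      = ∑ i, ∑ j, (A i j) ^ 2 * a i * b j
        + ∑ k, ∑ l, (B k l) ^ 2 * c k * d l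
        - 2 * trace ((A * T * Bᵀ)ᵀ * S) := by
  have expand_sq (i j k l) : (A i j - B k l) ^ 2 * S i k * T j l
      = A i j ^ 2 * S i k * T j l + B k l ^ 2 * S i k * T j l
        - 2 * (A i j * B k l * S i k * T j l) := by
    ring
  rw [← sum_mul_mul_eq_of_row_sums (fun i j => A i j ^ 2) hSrow hTrow,
    ← sum_mul_mul_eq_of_col_sums (fun k l => B k l ^ 2) hScol hTcol,
    trace_transpose_mul_mul_transpose_mul_eq_sum]
  simp only [expand_sq, sum_add_distrib, sum_sub_distrib, mul_sum (a := (2 : R))]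

end

/-- Decomposition of the Gromov–Wasserstein objective on the coupling polytope. -/
theorem gw_objective_decomposition {n m : ℕ}
    (h1 : Fin n → ℝ) (h2 : Fin m → ℝ)
    (hh1 : h1 ∈ probSimplex n) (hh2 : h2 ∈ probSimplex m)
    (C1 : Matrix (Fin n) (Fin n) ℝ) (C2 : Matrix (Fin m) (Fin m) ℝ)
    (T : Matrix (Fin n) (Fin m) ℝ) (hT : T ∈ couplings h1 h2) :
    gwObj C1 C2 T
      = ∑ i, ∑ j, (C1 i j) ^ 2 * h1 i * h1 j
        + ∑ k, ∑ l, (C2 k l) ^ 2 * h2 k * h2 l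
        - 2 * frob (C1 * T * C2ᵀ) T := by
  obtain ⟨-, hrow, hcol⟩ := hT
  exact gw_objective_decomposition_general C1 C2 hrow hcol hrow hcol
end
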